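/- arXiv:math/0509693 — 2 statements merged into one kernel-verified Lean document; each statement's English description precedes it below -/
import Mathlib

section
/- Let j be an odd positive integer, let Q be a nonempty finite index set, and for each q ∈ Q let c_q be a positive divisor of j and let d_q be a positive integer. Define the integer Laurent polynomial f(z) = ∏_{q∈Q} ( ∏_{k=1}^{c_q} (1 + z^{1 - 2k(j/c_q)}) )^{d_q}. Then 1 + z^j divides f in ℤ[z, z⁻¹] if and only if c_q = j for some q ∈ Q. -/
open LaurentPolynomial

/-!
If `ω` is a primitive `j`-th root of unity and `j` is odd, then `-ω` is a root of `1 + z ^ j`,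
and it is a root of `1 + z ^ e` only if `j ∣ e`. So if `1 + z ^ j` divides `f`, evaluating at `-ω`
gives `j ∣ 1 - 2k(j / c q)` for some `q` and `k`; as `j / c q` divides `j`, it divides `1`.
Conversely, for `c q = j` the factor of `f` with `k = (j + 1) / 2` is `1 + z ^ (-j)`.

Such an `ω` exists over the algebraic closure of some residue field of the coefficient ring as
soon as `j` is not nilpotent there.
-/

theorem eq_of_dvd_one_sub_mul_div {c j : ℕ} (hcj : c ∣ j) {a : ℤ}
    (h : (j : ℤ) ∣ 1 - a * ((j / c : ℕ) : ℤ)) : c = j := by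
  have hdvd : ((j / c : ℕ) : ℤ) ∣ 1 - a * ((j / c : ℕ) : ℤ) :=
    (Int.natCast_dvd_natCast.2 (Nat.div_dvd_of_dvd hcj)).trans h
  have hone : j / c = 1 :=
    Nat.dvd_one.1 (by exact_mod_cast (dvd_sub_left (dvd_mul_left _ _)).1 hdvd)
  exact Nat.eq_of_dvd_of_div_eq_one hcj hone

theorem dvd_of_neg_zpow_eq_neg_one {K : Type*} [Field K] {ω : K} {j : ℕ}
    (hω : IsPrimitiveRoot ω j) (hj : Odd j) {e : ℤ} (he : (-ω) ^ e = -1) : (j : ℤ) ∣ e := by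
  have hsq : ω ^ (2 * e) = 1 :=
    calc ω ^ (2 * e) = (-ω) ^ (2 * e) := ((even_two_mul e).neg_zpow ω).symm
      _ = ((-ω) ^ e) ^ (2 : ℤ) := zpow_mul' _ _ _
      _ = 1 := by rw [he, even_two.neg_one_zpow]
  have hcoprime : IsCoprime (j : ℤ) 2 := Nat.isCoprime_iff_coprime.2 hj.coprime_two_right
  exact hcoprime.dvd_of_dvd_mul_left ((hω.zpow_eq_one_iff_dvd _).1 hsq)

theorem exists_isPrimitiveRoot_algebraicClosure_residueField {R : Type*} [CommRing R] {j : ℕ}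
    (hj : ¬IsNilpotent (j : R)) :
    ∃ (p : Ideal R) (_ : p.IsPrime) (ω : AlgebraicClosure p.ResidueField),
      IsPrimitiveRoot ω j := by
  obtain ⟨p, hp, hjp⟩ : ∃ p : Ideal R, p.IsPrime ∧ (j : R) ∉ p := by
    simpa [nilpotent_iff_mem_prime] using hj
  have hjK : (j : p.ResidueField) ≠ 0 := by
    rwa [← map_natCast (algebraMap R p.ResidueField), Ne, Ideal.algebraMap_residueField_eq_zero]
  have : NeZero (j : p.ResidueField) := ⟨hjK⟩
  exact ⟨p, hp, HasEnoughRootsOfUnity.exists_primitiveRoot _ j⟩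

theorem exists_isPrime_one_add_T_mem {R : Type*} [CommRing R] {j : ℕ} (hodd : Odd j)
    (hj : ¬IsNilpotent (j : R)) :
    ∃ P : Ideal R[T;T⁻¹], P.IsPrime ∧ 1 + T (j : ℤ) ∈ P ∧
      ∀ e : ℤ, 1 + T e ∈ P → (j : ℤ) ∣ e := by
  obtain ⟨p, _, ω, hω⟩ := exists_isPrimitiveRoot_algebraicClosure_residueField hj
  have hζ : -ω ≠ 0 := neg_ne_zero.2 (hω.ne_zero hodd.pos.ne')
  let evalζ : R[T;T⁻¹] →+* AlgebraicClosure p.ResidueField :=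
    eval₂ (algebraMap R _) (Units.mk0 (-ω) hζ)
  have mem_ker (e : ℤ) : 1 + T e ∈ RingHom.ker evalζ ↔ (-ω) ^ e = -1 := by
    simp [evalζ, RingHom.mem_ker, add_eq_zero_iff_eq_neg']
  refine ⟨RingHom.ker evalζ, RingHom.ker_isPrime evalζ, (mem_ker j).2 ?_,
    fun e he ↦ dvd_of_neg_zpow_eq_neg_one hω hodd ((mem_ker e).1 he)⟩
  rw [zpow_natCast, hodd.neg_pow, hω.pow_eq_one]

theorem one_add_T_dvd_one_add_T_neg {R : Type*} [Semiring R] (n : ℤ) :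
    (1 + T n : R[T;T⁻¹]) ∣ 1 + T (-n) :=
  ⟨T (-n), by rw [add_mul, one_mul, ← T_add, add_neg_cancel, T_zero, add_comm]⟩

theorem one_add_T_dvd_prod_Icc {R : Type*} [CommSemiring R] {j : ℕ} (hodd : Odd j) :
    (1 + T (j : ℤ) : R[T;T⁻¹]) ∣ ∏ k ∈ Finset.Icc 1 j, (1 + T (1 - 2 * (k : ℤ))) := by
  obtain ⟨r, hr⟩ := hodd
  have hmem : r + 1 ∈ Finset.Icc 1 j := Finset.mem_Icc.2 (by lia)
  have hexp : 1 - 2 * ((r + 1 : ℕ) : ℤ) = -j := by lia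
  refine (one_add_T_dvd_one_add_T_neg (j : ℤ)).trans ?_
  rw [← hexp]
  exact Finset.dvd_prod_of_mem (fun k : ℕ ↦ (1 + T (1 - 2 * (k : ℤ)) : R[T;T⁻¹])) hmem

theorem one_add_pow_dvd_iff_exists_eq_general {R : Type*} [CommRing R] {j : ℕ} (hodd : Odd j)
    (hj : ¬IsNilpotent (j : R)) {Q : Type*} [Fintype Q] {c d : Q → ℕ}
    (hcj : ∀ q, c q ∣ j) (hd : ∀ q, 0 < d q) :
    (1 + T (j : ℤ)) ∣ (∏ q : Q,
      (∏ k ∈ Finset.Icc 1 (c q), (1 + T ((1 : ℤ) - 2 * (k : ℤ) * ((j / c q : ℕ) : ℤ)))) ^ d q :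
        R[T;T⁻¹]) ↔
    (∃ q : Q, c q = j) := by
  constructor
  · intro hdvd
    obtain ⟨P, hP, hjP, dvd_of_mem⟩ := exists_isPrime_one_add_T_mem hodd hj
    obtain ⟨q, -, hq⟩ := hP.prod_mem_iff.1 (P.mem_of_dvd hdvd hjP)
    obtain ⟨k, -, hk⟩ := hP.prod_mem_iff.1 (hP.mem_of_pow_mem _ hq)
    exact ⟨q, eq_of_dvd_one_sub_mul_div (hcj q) (dvd_of_mem _ hk)⟩
  · rintro ⟨q, hq⟩
    refine dvd_trans ?_ (Finset.dvd_prod_of_mem _ (Finset.mem_univ q))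
    refine dvd_trans ?_ (dvd_pow_self _ (hd q).ne')
    simpa only [hq, Nat.div_self hodd.pos, Nat.cast_one, mul_one] using one_add_T_dvd_prod_Icc hodd

/-- For an odd positive integer `j`, a nonempty finite index set `Q`, positive divisors
`c q ∣ j` and positive multiplicities `d q`, the integer Laurent polynomial
`f(z) = ∏_{q ∈ Q} (∏_{k=1}^{c q} (1 + z^{1 - 2k(j / c q)}))^{d q}`
is divisible by `1 + z^j` in `ℤ[z, z⁻¹]` if and only if `c q = j` for some `q ∈ Q`. -/
theorem one_add_pow_dvd_iff_exists_eq (j : ℕ) (hj : 0 < j) (hodd : Odd j)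
    (Q : Type) [Fintype Q] [Nonempty Q] (c d : Q → ℕ)
    (hc : ∀ q, 0 < c q) (hcj : ∀ q, c q ∣ j) (hd : ∀ q, 0 < d q) :
    (1 + T (j : ℤ)) ∣ (∏ q : Q,
      (∏ k ∈ Finset.Icc 1 (c q), (1 + T ((1 : ℤ) - 2 * (k : ℤ) * ((j / c q : ℕ) : ℤ)))) ^ d q :
        LaurentPolynomial ℤ) ↔
    (∃ q : Q, c q = j) :=
  one_add_pow_dvd_iff_exists_eq_general hodd (by simpa using hj.ne') hcj hd
end

section
/- Let k and l be positive integers and let i be an integer with i > l. Then the i-th group cohomology of the group G = ℤ/kℤ × ℤ^l with coefficients in ℤ with trivial G-action is isomorphic, as an abelian group, to (ℤ/kℤ)^{2^{l-1}}, the direct sum of 2^{l-1} copies of ℤ/kℤ. -/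
/-!
For a representation `A` of a group `G`, let `B` be its inflation to `G × ℤ` and let `C` be the
representation of `G × ℤ` coinduced from the restriction of `B` to `G × 0`. Elements of `C` are
essentially functions `ℤ → A`, and the constant functions together with the difference operator
form a short exact sequence `0 ⟶ B ⟶ C ⟶ C ⟶ 0`. By Shapiro's lemma, inflation
`Hⁿ(G, A) ⟶ Hⁿ(G × ℤ, B)` followed by `Hⁿ(G × ℤ, B) ⟶ Hⁿ(G × ℤ, C)` is an isomorphism. Hence the
second map is split surjective, the difference operator vanishes on `Hⁿ(G × ℤ, C)`, and the long
exact sequence gives `Hⁿ⁺¹(G × ℤ, B) ≅ Hⁿ(G, A) × Hⁿ⁺¹(G, A)`.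

In positive degrees the cohomology of a finite cyclic group of order `k` acting trivially on a
module `M` without `k`-torsion alternates between `0` and `M / kM`. So the first factor `ℤ` turns
it into one copy of `M / kM` in each degree at least two, and every further factor `ℤ` doubles the
number of copies, at the cost of one degree.
-/

open CategoryTheory Limits Rep groupCohomology
open scoped Pointwise

universe u

section Shapiro

variable {R G : Type u} [CommRing R] [Group G]

/-- The unit of the restriction-coinduction adjunction for the trivial subgroup. It embeds a
representation into one whose cohomology vanishes in positive degrees. -/
noncomputable def toCoindBot (A : Rep.{u} R G) :
    A ⟶ coind (⊥ : Subgroup G).subtype (res (⊥ : Subgroup G).subtype A) :=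
  resCoindToHom _ A _ (𝟙 _)

instance mono_toCoindBot (A : Rep.{u} R G) : Mono (toCoindBot A) := by
  refine (Rep.mono_iff_injective _).2 fun x y h ↦ ?_
  simpa [toCoindBot] using! congrFun (congrArg Subtype.val h) 1

theorem isZero_groupCohomology_coind_bot (A : Rep.{u} R (⊥ : Subgroup G)) (n : ℕ) :
    IsZero (groupCohomology (coind (⊥ : Subgroup G).subtype A) (n + 1)) :=
  (isZero_groupCohomology_succ_of_subsingleton _ n).of_iso (coindIso _ (n + 1))

variable {S : Subgroup G}

theorem shortExact_map_coindFunctor {X : ShortComplex (Rep.{u} R S)} (hX : X.ShortExact) :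
    (X.map (coindFunctor R S.subtype)).ShortExact where
  exact := hX.exact.map_of_mono_of_preservesKernel _ hX.mono_f inferInstance
  mono_f :=
    have := hX.mono_f
    have := (coindFunctor R S.subtype).preservesMonomorphisms_of_adjunction
      (resCoindAdjunction R S.subtype)
    (coindFunctor R S.subtype).map_mono X.f
  epi_g :=
    have := hX.epi_g
    (coindFunctor R S.subtype).map_epi X.g

/-- The map of Shapiro's lemma: restriction to `S` followed by evaluation at `1`. The isomorphism
`groupCohomology.coindIso` is built from a projective resolution instead and is not known to be
compatible with other maps in cohomology. -/
noncomputable def shapiroMap (A : Rep.{u} R S) (n : ℕ) :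
    groupCohomology (coind S.subtype A) n ⟶ groupCohomology A n :=
  map S.subtype ((resCoindAdjunction R S.subtype).counit.app A) n

theorem map_coindFunctor_map_comp_shapiroMap {A B : Rep.{u} R S} (f : A ⟶ B) (n : ℕ) :
    map (MonoidHom.id G) ((coindFunctor R S.subtype).map f) n ≫ shapiroMap B n =
      shapiroMap A n ≫ map (MonoidHom.id S) f n := by
  rw [shapiroMap, shapiroMap, ← map_comp]
  refine Eq.trans ?_ (map_comp _ _ _ _ n)
  exact map_congr rfl rfl n

theorem δ_comp_shapiroMap {X : ShortComplex (Rep.{u} R S)} (hX : X.ShortExact) (n : ℕ) :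
    δ (shortExact_map_coindFunctor hX) n (n + 1) rfl ≫ shapiroMap X.X₁ (n + 1) =
      shapiroMap X.X₃ n ≫ δ hX n (n + 1) rfl := by
  let ε := (resCoindAdjunction R S.subtype).counit
  let F : (X.map (coindFunctor R S.subtype)).map (cochainsFunctor R G) ⟶
      X.map (cochainsFunctor R S) :=
    { τ₁ := cochainsMap S.subtype (ε.app X.X₁)
      τ₂ := cochainsMap S.subtype (ε.app X.X₂)
      τ₃ := cochainsMap S.subtype (ε.app X.X₃)
      comm₁₂ := rfl
      comm₂₃ := rfl }
  exact HomologicalComplex.HomologySequence.δ_naturality F _ _ n (n + 1) rfl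

theorem H0Iso_hom_shapiroMap_apply (A : Rep.{u} R S)
    (x : groupCohomology (coind S.subtype A) 0) :
    ((H0Iso A).hom (shapiroMap A 0 x)).1 = ((H0Iso (coind S.subtype A)).hom x).1.1 1 :=
  ConcreteCategory.congr_hom
    (map_H0Iso_hom_f S.subtype ((resCoindAdjunction R S.subtype).counit.app A)) x

theorem isIso_shapiroMap_zero (A : Rep.{u} R S) : IsIso (shapiroMap A 0) := by
  have apply_eq (f : (coind S.subtype A).ρ.invariants) (g : G) : f.1.1 g = f.1.1 1 :=
    (congrArg f.1.1 (one_mul g)).symm.trans (congrFun (congrArg Subtype.val (f.2 g)) 1)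
  refine (ConcreteCategory.isIso_iff_bijective _).2 ⟨fun x y hxy ↦ ?_, fun y ↦ ?_⟩
  · apply (H0Iso (coind S.subtype A)).toLinearEquiv.injective
    refine Subtype.ext (Subtype.ext (funext fun g ↦ ?_))
    refine (apply_eq _ g).trans (Eq.trans ?_ (apply_eq _ g).symm)
    refine (H0Iso_hom_shapiroMap_apply A x).symm.trans ?_
    exact hxy ▸ H0Iso_hom_shapiroMap_apply A y
  · let a := (H0Iso A).hom y
    let f : (coind S.subtype A).ρ.invariants :=
      ⟨⟨fun _ ↦ a.1, fun s _ ↦ (a.2 s).symm⟩, fun _ ↦ rfl⟩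
    refine ⟨(H0Iso (coind S.subtype A)).inv f, (H0Iso A).toLinearEquiv.injective (Subtype.ext ?_)⟩
    refine (H0Iso_hom_shapiroMap_apply A _).trans ?_
    exact congrArg (fun f ↦ f.1.1 1)
      (ConcreteCategory.congr_hom (H0Iso (coind S.subtype A)).inv_hom_id f)

theorem isIso_shapiroMap (A : Rep.{u} R S) (n : ℕ) : IsIso (shapiroMap A n) := by
  induction n generalizing A with
  | zero => exact isIso_shapiroMap_zero A
  | succ n ih =>
    let X := ShortComplex.mk (toCoindBot A) (cokernel.π (toCoindBot A)) (cokernel.condition _)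
    have hX : X.ShortExact := { exact := ShortComplex.exact_cokernel (toCoindBot A) }
    have hY := shortExact_map_coindFunctor hX
    have hX₂ : IsZero (groupCohomology X.X₂ (n + 1)) := isZero_groupCohomology_coind_bot _ n
    have hY₂ : IsZero (groupCohomology (coind S.subtype X.X₂) (n + 1)) :=
      hX₂.of_iso (coindIso _ (n + 1))
    have epi_δX := epi_δ_of_isZero hX n hX₂
    have epi_δY := epi_δ_of_isZero hY n hY₂
    have iso₂ : IsIso (shapiroMap X.X₂ n) := ih X.X₂
    have iso₃ : IsIso (shapiroMap X.X₃ n) := ih X.X₃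
    let φ : mapShortComplex₃ hY (rfl : n + 1 = n + 1) ⟶ mapShortComplex₃ hX rfl :=
      { τ₁ := shapiroMap X.X₂ n
        τ₂ := shapiroMap X.X₃ n
        τ₃ := shapiroMap X.X₁ (n + 1)
        comm₁₂ := (map_coindFunctor_map_comp_shapiroMap X.g n).symm
        comm₂₃ := (δ_comp_shapiroMap hX n).symm }
    have : Mono φ.τ₃ := ShortComplex.mono_of_epi_of_epi_of_mono φ (mapShortComplex₃_exact hX rfl)
      epi_δY iso₂.epi_of_iso iso₃.mono_of_iso
    have : Epi (shapiroMap X.X₃ n ≫ δ hX n (n + 1) rfl) := epi_comp' iso₃.epi_of_iso epi_δX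
    have : Epi (δ hY n (n + 1) rfl ≫ shapiroMap X.X₁ (n + 1)) :=
      (δ_comp_shapiroMap hX n).symm ▸ this
    have : Epi φ.τ₃ := epi_of_epi (δ hY n (n + 1) rfl) (shapiroMap X.X₁ (n + 1))
    exact isIso_of_mono_of_epi φ.τ₃

end Shapiro

section ProdInt

theorem fwdDiff_one_surjective (A : Type*) [AddCommGroup A] :
    Function.Surjective (fwdDiff (1 : ℤ) : (ℤ → A) → ℤ → A) := by
  intro f
  refine ⟨fun n ↦ ∑ i ∈ Finset.Ico 0 n, f i - ∑ i ∈ Finset.Ico n 0, f i, funext fun n ↦ ?_⟩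
  rw [fwdDiff]
  rcases le_or_gt 0 n with hn | hn
  · rw [← Finset.insert_Ico_right_eq_Ico_add_one hn, Finset.sum_insert (by simp),
      Finset.Ico_eq_empty_of_le hn, Finset.Ico_eq_empty_of_le (by lia : 0 ≤ n + 1)]
    simp
  · rw [← Finset.insert_Ico_add_one_left_eq_Ico hn, Finset.sum_insert (by simp),
      Finset.Ico_eq_empty_of_le hn.le, Finset.Ico_eq_empty_of_le (by lia : n + 1 ≤ 0)]
    simp

variable {R G : Type u} [CommRing R] [Group G]

variable (G) in
/-- The subgroup `G × 0` of `G × ℤ`. -/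
abbrev kerSnd : Subgroup (G × Multiplicative ℤ) := (MonoidHom.snd G (Multiplicative ℤ)).ker

variable (G) in
/-- The identification of `G` with the subgroup `G × 0` of `G × ℤ`. -/
def kerSndEquiv : G ≃* kerSnd G where
  toFun g := ⟨(g, 1), rfl⟩
  invFun x := x.1.1
  left_inv _ := rfl
  right_inv x := Subtype.ext (Prod.ext rfl (Eq.symm x.2))
  map_mul' _ _ := rfl

/-- The inflation of a representation of `G` to `G × ℤ`. -/
abbrev inflProdInt (A : Rep.{u} R G) : Rep.{u} R (G × Multiplicative ℤ) :=
  res (MonoidHom.fst G (Multiplicative ℤ)) A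

/-- The representation of `G × ℤ` coinduced from the representation `A` of `G × 0 ≃ G`. -/
noncomputable abbrev coindProdInt (A : Rep.{u} R G) : Rep.{u} R (G × Multiplicative ℤ) :=
  coind (kerSnd G).subtype (res (kerSnd G).subtype (inflProdInt A))

theorem coindProdInt_apply {A : Rep.{u} R G} (f : coindProdInt A) (x : G × Multiplicative ℤ) :
    f.1 x = A.ρ x.1 (f.1 (1, x.2)) := by
  simpa using f.2 ⟨(x.1, 1), rfl⟩ (1, x.2)

/-- The embedding of `A` into `coindProdInt A` as the functions that are constant on `ℤ`. -/
noncomputable def constHom (A : Rep.{u} R G) : inflProdInt A ⟶ coindProdInt A :=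
  (resCoindAdjunction R (kerSnd G).subtype).unit.app (inflProdInt A)

/-- The difference operator `f ↦ (x ↦ f (x + 1) - f x)` in the `ℤ` direction. It is equivariant
because `ℤ` is central in `G × ℤ`. -/
noncomputable def diffHom (A : Rep.{u} R G) : coindProdInt A ⟶ coindProdInt A :=
  ofHom ⟨((LinearMap.funLeft R A (· * (1, Multiplicative.ofAdd 1))).restrict fun f hf s x ↦ by
      simpa [mul_assoc] using hf s (x * (1, Multiplicative.ofAdd 1))) - LinearMap.id, fun g ↦ by
    refine LinearMap.ext fun f ↦ Subtype.ext (funext fun x ↦ ?_)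
    have hcomm : g * (1, Multiplicative.ofAdd 1) = (1, Multiplicative.ofAdd 1) * g :=
      Prod.ext (by simp) (mul_comm _ _)
    change f.1 (x * (1, Multiplicative.ofAdd 1) * g) - f.1 (x * g) =
      f.1 (x * g * (1, Multiplicative.ofAdd 1)) - f.1 (x * g)
    rw [mul_assoc, ← hcomm, mul_assoc]⟩

theorem diffHom_apply {A : Rep.{u} R G} (f : coindProdInt A) (g : G) (n : ℤ) :
    ((diffHom A).hom f).1 (g, .ofAdd n) = f.1 (g, .ofAdd (n + 1)) - f.1 (g, .ofAdd n) :=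
  congrArg (fun h ↦ f.1 (h, .ofAdd (n + 1)) - f.1 (g, .ofAdd n)) (mul_one g)

theorem constHom_comp_diffHom (A : Rep.{u} R G) : constHom A ≫ diffHom A = 0 := by
  refine Rep.hom_ext (Representation.IntertwiningMap.ext (LinearMap.ext fun a ↦ ?_))
  refine Subtype.ext (funext fun x ↦ ?_)
  exact (diffHom_apply ((constHom A).hom a) x.1 x.2.toAdd).trans (sub_self _)

theorem constHom_injective (A : Rep.{u} R G) : Function.Injective (constHom A).hom := by
  intro a b h
  have : A.ρ 1 a = A.ρ 1 b := congrFun (congrArg Subtype.val h) 1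
  rwa [A.ρ.map_one] at this

theorem constHom_apply_one_of_diffHom_eq_zero {A : Rep.{u} R G} {f : coindProdInt A}
    (hf : (diffHom A).hom f = 0) : (constHom A).hom (f.1 1) = f := by
  have hsucc (n : ℤ) : f.1 (1, .ofAdd (n + 1)) = f.1 (1, .ofAdd n) := by
    rw [← sub_eq_zero, ← diffHom_apply]
    exact congrFun (congrArg Subtype.val hf) _
  have hconst (n : ℤ) : f.1 (1, .ofAdd n) = f.1 1 := by
    induction n with
    | zero => rfl
    | succ n ih => rw [hsucc, ih]
    | pred n ih => rw [← ih, ← hsucc, sub_add_cancel]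
  refine Subtype.ext (funext fun x ↦ ?_)
  exact ((coindProdInt_apply f x).trans (congrArg (A.ρ x.1) (hconst x.2.toAdd))).symm

theorem diffHom_surjective (A : Rep.{u} R G) : Function.Surjective (diffHom A).hom := by
  intro f
  obtain ⟨F, hF⟩ := fwdDiff_one_surjective A fun n : ℤ ↦ f.1 (1, .ofAdd n)
  refine ⟨⟨fun x ↦ A.ρ x.1 (F x.2.toAdd), fun s x ↦ ?_⟩, Subtype.ext (funext fun x ↦ ?_)⟩
  · have : s.1.2 = 1 := s.2
    simp [this]
  · calc
      _ = A.ρ x.1 (F (x.2.toAdd + 1)) - A.ρ x.1 (F x.2.toAdd) := diffHom_apply _ x.1 x.2.toAdd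
      _ = A.ρ x.1 (fwdDiff 1 F x.2.toAdd) := (map_sub (A.ρ x.1) _ _).symm
      _ = A.ρ x.1 (f.1 (1, x.2)) := congrArg (A.ρ x.1) (congrFun hF _)
      _ = f.1 x := (coindProdInt_apply f x).symm

/-- The complex `0 ⟶ A ⟶ coindProdInt A ⟶ coindProdInt A ⟶ 0` of representations of `G × ℤ`. -/
noncomputable def diffShortComplex (A : Rep.{u} R G) :
    ShortComplex (Rep.{u} R (G × Multiplicative ℤ)) :=
  ShortComplex.mk (constHom A) (diffHom A) (constHom_comp_diffHom A)

theorem diffShortComplex_shortExact (A : Rep.{u} R G) : (diffShortComplex A).ShortExact where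
  exact := by
    rw [← ShortComplex.exact_map_iff_of_faithful _
        (forget₂ (Rep R (G × Multiplicative ℤ)) (ModuleCat R)),
      ShortComplex.moduleCat_exact_iff]
    exact fun (f : coindProdInt A) hf ↦ ⟨f.1 1, constHom_apply_one_of_diffHom_eq_zero hf⟩
  mono_f := (Rep.mono_iff_injective _).2 (constHom_injective A)
  epi_g := (Rep.epi_iff_surjective _).2 (diffHom_surjective A)

/-- The inflation map `Hⁿ(G, A) ⟶ Hⁿ(G × ℤ, A)`. -/
noncomputable def inflMap (A : Rep.{u} R G) (n : ℕ) :
    groupCohomology A n ⟶ groupCohomology (inflProdInt A) n :=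
  map (MonoidHom.fst G (Multiplicative ℤ)) (𝟙 (inflProdInt A)) n

/-- The map induced by `constHom` in cohomology. -/
noncomputable def constMap (A : Rep.{u} R G) (n : ℕ) :
    groupCohomology (inflProdInt A) n ⟶ groupCohomology (coindProdInt A) n :=
  map (A := inflProdInt A) (MonoidHom.id _) (constHom A) n

theorem constMap_comp_shapiroMap (A : Rep.{u} R G) (n : ℕ) :
    constMap A n ≫ shapiroMap _ n =
      map (kerSnd G).subtype (𝟙 (res (kerSnd G).subtype (inflProdInt A))) n := by
  refine (map_comp _ _ _ _ n).symm.trans (map_congr rfl ?_ n)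
  exact congrArg (fun f ↦ f.hom.toLinearMap)
    ((resCoindAdjunction R (kerSnd G).subtype).left_triangle_components (inflProdInt A))

theorem isIso_inflMap_comp_constMap (A : Rep.{u} R G) (n : ℕ) :
    IsIso (inflMap A n ≫ constMap A n) := by
  let B := res (kerSnd G).subtype (inflProdInt A)
  have := isIso_shapiroMap B n
  have h : (inflMap A n ≫ constMap A n) ≫ shapiroMap B n =
      (mapIso (A := B) (kerSndEquiv G) (LinearEquiv.refl R A) (fun _ ↦ rfl) n).hom := by
    rw [Category.assoc, constMap_comp_shapiroMap, inflMap, ← map_comp]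
    exact map_congr rfl rfl n
  have : IsIso ((inflMap A n ≫ constMap A n) ≫ shapiroMap B n) := h ▸ inferInstance
  exact IsIso.of_isIso_comp_right _ (shapiroMap B n)

theorem map_diffHom (A : Rep.{u} R G) (n : ℕ) :
    map (A := coindProdInt A) (MonoidHom.id _) (diffHom A) n = 0 := by
  have := isIso_inflMap_comp_constMap A n
  rw [← cancel_epi (inflMap A n ≫ constMap A n), comp_zero, Category.assoc, constMap,
    ← map_id_comp, constHom_comp_diffHom]
  exact (congrArg _ ((functor R (G × Multiplicative ℤ) n).map_zero _ _)).trans comp_zero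

/-- The Künneth decomposition `Hⁿ⁺¹(G × ℤ, A) ≃ Hⁿ(G, A) × Hⁿ⁺¹(G, A)`. -/
noncomputable def groupCohomologyProdIntEquiv (A : Rep.{u} R G) (n : ℕ) :
    groupCohomology (inflProdInt A) (n + 1) ≃ₗ[R]
      groupCohomology A n × groupCohomology A (n + 1) :=
  have hA := diffShortComplex_shortExact A
  have mono_δ := (mapShortComplex₃_exact hA rfl).mono_g (map_diffHom A n)
  let e (m : ℕ) : groupCohomology A m ≅ groupCohomology (coindProdInt A) m :=
    have := isIso_inflMap_comp_constMap A m
    asIso (inflMap A m ≫ constMap A m)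
  let s : (mapShortComplex₁ hA (rfl : n + 1 = n + 1)).Splitting :=
    .ofExactOfSection _ (mapShortComplex₁_exact hA rfl) ((e (n + 1)).inv ≫ inflMap A (n + 1))
      ((Category.assoc _ _ _).trans (e (n + 1)).inv_hom_id) mono_δ
  (s.isoBinaryBiproduct ≪≫ biprod.mapIso (e n).symm (e (n + 1)).symm ≪≫
    ModuleCat.biprodIsoProd _ _).toLinearEquiv

end ProdInt

section FiniteCyclic

open Rep.FiniteCyclicGroup

variable {R G M : Type u} [CommRing R] [CommGroup G] [AddCommGroup M] [Module R M]

theorem applyAsHom_trivial_sub_id (g : G) :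
    applyAsHom (trivial R G M) g - 𝟙 (trivial R G M) = 0 :=
  sub_eq_zero.2 (Rep.hom_ext (Representation.IntertwiningMap.ext (LinearMap.ext fun _ ↦ rfl)))

variable [Fintype G]

theorem norm_trivial_apply (x : M) :
    (trivial R G M).norm.hom x = (Fintype.card G : R) • x := by
  simp [Rep.norm, Representation.norm, Nat.cast_smul_eq_nsmul]

theorem range_norm_trivial :
    LinearMap.range (trivial R G M).norm.hom.toLinearMap =
      (Fintype.card G : R) • (⊤ : Submodule R M) :=
  (congrArg LinearMap.range (LinearMap.ext fun x : M ↦ norm_trivial_apply x)).trans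
    (LinearMap.range_eq_map (DistribSMul.toLinearMap R M (Fintype.card G : R)))

variable (R M) in
/-- In positive even degrees, the cohomology of a finite cyclic group acting trivially on `M` is
`M` modulo the order of the group. -/
noncomputable def groupCohomologyTrivialEquivOfEven {g : G} (hg : ∀ x, x ∈ Subgroup.zpowers g)
    {i : ℕ} [NeZero i] (hi : Even i) :
    groupCohomology (trivial R G M) i ≃ₗ[R] QuotSMulTop (Fintype.card G : R) M :=
  have hzero : (normHomCompSub (trivial R G M) g).g = 0 :=
    congrArg (fun f ↦ ModuleCat.ofHom f.hom.toLinearMap) (applyAsHom_trivial_sub_id g)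
  (groupCohomologyIsoEven (trivial R G M) g hg i hi ≪≫ ShortComplex.asIsoHomologyι _ hzero ≪≫
    ShortComplex.opcyclesIsoCokernel _ ≪≫
    ModuleCat.cokernelIsoRangeQuotient _).toLinearEquiv ≪≫ₗ
      Submodule.quotEquivOfEq _ _ range_norm_trivial

theorem subsingleton_groupCohomology_trivial_of_odd (hM : IsSMulRegular M (Fintype.card G : R))
    {g : G} (hg : ∀ x, x ∈ Subgroup.zpowers g) {i : ℕ} (hi : Odd i) :
    Subsingleton (groupCohomology (trivial R G M) i) := by
  have hzero : (subCompNormHom (trivial R G M) g).f = 0 :=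
    congrArg (fun f ↦ ModuleCat.ofHom f.hom.toLinearMap) (applyAsHom_trivial_sub_id g)
  have hmono : Mono (subCompNormHom (trivial R G M) g).g :=
    (ModuleCat.mono_iff_injective _).2 fun x y hxy ↦
      hM ((norm_trivial_apply x).symm.trans (hxy.trans (norm_trivial_apply y)))
  have hexact := (ShortComplex.exact_iff_mono _ hzero).2 hmono
  exact ModuleCat.subsingleton_of_isZero <|
    ((ShortComplex.exact_iff_isZero_homology _).1 hexact).of_iso
      (groupCohomologyIsoOdd _ g hg i hi)

theorem nonempty_groupCohomology_trivial_prod_succ_equiv [IsCyclic G]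
    (hM : IsSMulRegular M (Fintype.card G : R)) (i : ℕ) [NeZero i] :
    Nonempty ((groupCohomology (trivial R G M) i × groupCohomology (trivial R G M) (i + 1)) ≃ₗ[R]
      QuotSMulTop (Fintype.card G : R) M) := by
  obtain ⟨g, hg⟩ := IsCyclic.exists_generator (α := G)
  rcases i.even_or_odd with hi | hi
  · have := subsingleton_groupCohomology_trivial_of_odd hM hg hi.add_one
    have := uniqueOfSubsingleton (0 : groupCohomology (trivial R G M) (i + 1))
    exact ⟨.prodUnique ≪≫ₗ groupCohomologyTrivialEquivOfEven R M hg hi⟩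
  · have := subsingleton_groupCohomology_trivial_of_odd hM hg hi
    have := uniqueOfSubsingleton (0 : groupCohomology (trivial R G M) i)
    exact ⟨.uniqueProd ≪≫ₗ groupCohomologyTrivialEquivOfEven R M hg hi.add_one⟩

end FiniteCyclic

section ProdFreeAbelian

variable (R M A : Type u) [CommRing R] [AddCommGroup M] [Module R M] [AddCommGroup A]

/-- Isomorphic groups have isomorphic cohomology with trivial coefficients. -/
noncomputable def groupCohomologyTrivialCongr {G H : Type u} [Group G] [Group H] (e : G ≃* H)
    (n : ℕ) : groupCohomology (trivial R G M) n ≃ₗ[R] groupCohomology (trivial R H M) n :=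
  (mapIso e (LinearEquiv.refl R M) (fun _ ↦ rfl) n).toLinearEquiv

/-- The splitting of the first coordinate off `ℤˡ⁺¹`. -/
def prodFinSuccEquiv (l : ℕ) :
    Multiplicative (A × (Fin (l + 1) → ℤ)) ≃*
      Multiplicative (A × (Fin l → ℤ)) × Multiplicative ℤ where
  toFun x := (.ofAdd (x.toAdd.1, Fin.tail x.toAdd.2), .ofAdd (x.toAdd.2 0))
  invFun y := .ofAdd (y.1.toAdd.1, Fin.cons y.2.toAdd y.1.toAdd.2)
  left_inv x := by simp
  right_inv y := by simp
  map_mul' _ _ := rfl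

/-- The decomposition `Hⁿ⁺¹(A × ℤˡ⁺¹, M) ≃ Hⁿ(A × ℤˡ, M) × Hⁿ⁺¹(A × ℤˡ, M)`. -/
noncomputable def groupCohomologyProdFinSuccEquiv (l n : ℕ) :
    groupCohomology (trivial R (Multiplicative (A × (Fin (l + 1) → ℤ))) M) (n + 1) ≃ₗ[R]
      groupCohomology (trivial R (Multiplicative (A × (Fin l → ℤ))) M) n ×
        groupCohomology (trivial R (Multiplicative (A × (Fin l → ℤ))) M) (n + 1) :=
  groupCohomologyTrivialCongr R M (prodFinSuccEquiv A l) (n + 1) ≪≫ₗ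
    groupCohomologyProdIntEquiv (trivial R _ M) n

/-- The identification of two copies of `M ^ 2ˡ` with `M ^ 2ˡ⁺¹`. -/
def finTwoPowSuccArrowEquiv (l : ℕ) :
    ((Fin (2 ^ l) → M) × (Fin (2 ^ l) → M)) ≃ₗ[R] (Fin (2 ^ (l + 1)) → M) :=
  (LinearEquiv.sumArrowLequivProdArrow _ _ R M).symm ≪≫ₗ
    LinearEquiv.funCongrLeft R M ((finCongr (by ring)).trans finSumFinEquiv.symm)

variable {R M A}

theorem groupCohomology_zmod_prod_free_abelian_general [Fintype A] [IsAddCyclic A]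
    (hM : IsSMulRegular M (Fintype.card A : R)) {l i : ℕ} (hi : l + 1 < i) :
    Nonempty (groupCohomology (trivial R (Multiplicative (A × (Fin (l + 1) → ℤ))) M) i ≃ₗ[R]
      (Fin (2 ^ l) → QuotSMulTop (Fintype.card A : R) M)) := by
  obtain ⟨i, rfl⟩ := Nat.exists_eq_add_one_of_ne_zero (by lia : i ≠ 0)
  induction l generalizing i with
  | zero =>
    have : NeZero i := ⟨by lia⟩
    let e := groupCohomologyTrivialCongr R M
      (AddEquiv.toMultiplicative (AddEquiv.prodUnique : A × (Fin 0 → ℤ) ≃+ A))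
    obtain ⟨f⟩ := nonempty_groupCohomology_trivial_prod_succ_equiv (G := Multiplicative A)
      (by rwa [Fintype.card_multiplicative]) i
    rw [Fintype.card_multiplicative] at f
    exact ⟨groupCohomologyProdFinSuccEquiv R M A 0 i ≪≫ₗ (e i).prodCongr (e (i + 1)) ≪≫ₗ f ≪≫ₗ
      (LinearEquiv.funUnique (Fin 1) R _).symm⟩
  | succ l ih =>
    obtain ⟨i, rfl⟩ := Nat.exists_eq_add_one_of_ne_zero (by lia : i ≠ 0)
    obtain ⟨e⟩ := ih i (by lia)
    obtain ⟨e'⟩ := ih (i + 1) (by lia)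
    exact ⟨groupCohomologyProdFinSuccEquiv R M A (l + 1) (i + 1) ≪≫ₗ e.prodCongr e' ≪≫ₗ
      finTwoPowSuccArrowEquiv R _ l⟩

end ProdFreeAbelian

/-- The quotient `ℤ / kℤ`, with `k` written as the cardinality of `ZMod k`. -/
noncomputable def quotSMulTopCardZModEquiv (k : ℕ) [NeZero k] :
    QuotSMulTop (Fintype.card (ZMod k) : ℤ) ℤ ≃+ ZMod k :=
  have hspan : (Fintype.card (ZMod k) : ℤ) • (⊤ : Ideal ℤ) = Ideal.span {(k : ℤ)} := by
    rw [ZMod.card, ← Submodule.ideal_span_singleton_smul, smul_eq_mul, Ideal.mul_top]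
  (Submodule.quotEquivOfEq _ _ hspan).toAddEquiv.trans (Int.quotientSpanNatEquivZMod k).toAddEquiv

/-- For positive integers `k`, `l` and any degree `i > l`, the `i`-th group cohomology of
`G = ℤ/kℤ × ℤˡ` (with trivial action on `ℤ`) is isomorphic as an abelian group to
`(ℤ/kℤ)^{2^{l-1}}`. -/
theorem groupCohomology_zmod_prod_free_abelian (k l : ℕ) (hk : 0 < k) (hl : 0 < l)
    (i : ℕ) (hi : l < i) :
    Nonempty
      ((groupCohomology
          (Rep.trivial ℤ (Multiplicative (ZMod k × (Fin l → ℤ))) ℤ) i) ≃+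
        (Fin (2 ^ (l - 1)) → ZMod k)) := by
  have : NeZero k := ⟨hk.ne'⟩
  obtain ⟨l, rfl⟩ := Nat.exists_eq_add_one_of_ne_zero hl.ne'
  have hreg : IsSMulRegular ℤ (Fintype.card (ZMod k) : ℤ) :=
    .of_ne_zero (Nat.cast_ne_zero.2 Fintype.card_ne_zero)
  obtain ⟨e⟩ := groupCohomology_zmod_prod_free_abelian_general hreg hi
  exact ⟨e.toAddEquiv.trans (.piCongrRight fun _ ↦ quotSMulTopCardZModEquiv k)⟩
end
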